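/- Let p be a prime, q = p^t, let H be a nondegenerate Hermitian unital in PG(2, q^2) and let U be any unital embedded in PG(2, q^2) (a set of q^3+1 points meeting every line in 1 or q+1 points). Then |H ∩ U| ≡ 1 (mod p^⌈t/2⌉). -/

import Mathlib

theorem hmu_gr_dvd {T : Type*} [CommGroup T] [Fintype T] (p m : ℕ) (hp : p.Prime)
    (hm : 0 < m) (hT : ∀ τ : T, τ ^ (p ^ m) = τ) (S : T → ℤ)
    (h : ∀ w, (p : ℤ) ∣ ∑ u, S u * S (w / u)) (w : T) : (p : ℤ) ∣ S w := by
  classical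
  have : Fact p.Prime := ⟨hp⟩
  let a : MonoidAlgebra (ZMod p) T := ∑ u, MonoidAlgebra.single u (S u : ZMod p)
  have ha2 : a * a = 0 := by
    have : a * a = ∑ w, MonoidAlgebra.single w (∑ u, (S u : ZMod p) * (S (w / u) : ZMod p)) := by
      simp only [a, Finset.sum_mul, Finset.mul_sum, MonoidAlgebra.single_mul_single]
      have hs : ∀ (w : T) (g : T → ZMod p), MonoidAlgebra.single w (∑ u, g u)
          = ∑ u, MonoidAlgebra.single w (g u) := fun w g =>
        map_sum (MonoidAlgebra.singleAddHom w) g Finset.univ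
      simp only [hs]
      rw [Finset.sum_comm]
      conv_rhs => rw [Finset.sum_comm]
      rw [Finset.sum_comm]
      refine Finset.sum_congr rfl fun u _ => ?_
      refine Fintype.sum_equiv (Equiv.mulLeft u) _ _ fun v => ?_
      simp [mul_comm]
    rw [this]
    refine Finset.sum_eq_zero fun w _ => ?_
    have := (ZMod.intCast_zmod_eq_zero_iff_dvd _ p).2 (h w)
    push_cast at this
    rw [this]; simp
  have : CharP (MonoidAlgebra (ZMod p) T) p :=
    charP_of_injective_algebraMap' (ZMod p) p
  have hap : a ^ (p ^ m) = a := by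
    simp only [a]
    rw [sum_pow_char_pow]
    refine Finset.sum_congr rfl fun u _ => ?_
    rw [MonoidAlgebra.single_pow, hT, ZMod.pow_card_pow]
  have ha : a = 0 := by
    have h2 : 2 ≤ p ^ m := hp.two_le.trans (Nat.le_self_pow hm.ne' p)
    rw [← hap, ← Nat.sub_add_cancel h2, pow_add, pow_two, ha2, mul_zero]
  have : a.coeff w = (S w : ZMod p) := by
    simp only [a]
    rw [MonoidAlgebra.coeff_sum, Finsupp.finsetSum_apply]
    simp [Finsupp.single_apply]
  rw [ha] at this
  exact (ZMod.intCast_zmod_eq_zero_iff_dvd _ p).1 this.symm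

theorem hmu_gr {T : Type*} [CommGroup T] [Fintype T] (p m : ℕ) (hp : p.Prime)
    (hm : 0 < m) (hT : ∀ τ : T, τ ^ (p ^ m) = τ) (t : ℕ) : ∀ (S : T → ℤ)
    (_ : ∀ w, (p : ℤ) ^ t ∣ ∑ u, S u * S (w / u)) (w : T), (p : ℤ) ^ ((t + 1) / 2) ∣ S w := by
  induction t using Nat.strong_induction_on with
  | _ t ih =>
    intro S h w
    rcases Nat.eq_zero_or_pos t with rfl | ht
    · simp
    have hd : ∀ w, (p : ℤ) ∣ S w :=
      hmu_gr_dvd p m hp hm hT S fun w => (dvd_pow_self _ ht.ne').trans (h w)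
    choose S' hS' using hd
    obtain rfl | ht2 : t = 1 ∨ 2 ≤ t := by omega
    · simp [hS']
    obtain ⟨s, rfl⟩ : ∃ s, t = s + 2 := ⟨t - 2, by omega⟩
    have hp0 : (p : ℤ) ≠ 0 := by exact_mod_cast hp.ne_zero
    have := ih s (by omega) S' (fun w => by
      have := h w
      have e : ∑ u, S u * S (w / u) = (p : ℤ) ^ 2 * ∑ u, S' u * S' (w / u) := by
        rw [Finset.mul_sum]
        refine Finset.sum_congr rfl fun u _ => ?_
        rw [hS' u, hS' (w / u)]; ring
      rw [e, add_comm, pow_add] at this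
      exact (mul_dvd_mul_iff_left (pow_ne_zero 2 hp0)).1 this) w
    rw [hS' w, show (s + 2 + 1) / 2 = 1 + (s + 1) / 2 by omega, pow_add, pow_one]
    exact mul_dvd_mul_left _ this


section HMU
set_option linter.unusedSectionVars false
open Finset
variable {F K : Type*} [Field F] [Field K] [Fintype F] [Fintype K] [DecidableEq F] [DecidableEq K]

/-- count of line-type configurations over the small field -/
def hmuR (a1 a2 a3 : F) : ℕ :=
  #{x : Fˣ × Fˣ × Fˣ | (x.1 : F) + x.2.1 + x.2.2 = 0 ∧
    a1 * (x.1 : F)⁻¹ + a2 * (x.2.1 : F)⁻¹ + a3 * (x.2.2 : F)⁻¹ = 0}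

/-- count of lines of given norm type through a point -/
def hmuK (N : K →*₀ F) (w1 w2 w3 : F) (v1 v2 v3 : K) : ℕ :=
  #{r : K × K × K | N r.1 = w1 ∧ N r.2.1 = w2 ∧ N r.2.2 = w3 ∧
    r.1 * v1 + r.2.1 * v2 + r.2.2 * v3 = 0}

theorem hmuR_eq (a1 a2 a3 : F) : hmuR a1 a2 a3 = Fintype.card Fˣ *
    #{s : F | s ≠ 0 ∧ 1 + s ≠ 0 ∧ (a1 * s + a2) * (1 + s) = a3 * s} := by
  rw [hmuR, ← Finset.card_univ, ← Finset.card_product]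
  refine Finset.card_bij (fun x _ => (x.1, (x.2.1 : F) * (x.1 : F)⁻¹)) ?_ ?_ ?_
  · rintro ⟨x1, x2, x3⟩ h
    simp only [mem_filter, mem_univ, true_and, mem_product] at h ⊢
    obtain ⟨h1, h2⟩ := h
    have n1 := x1.ne_zero
    have n2 := x2.ne_zero
    have n3 := x3.ne_zero
    have e3 : (x3 : F) = -(x1 + x2) := by linear_combination h1
    rw [e3] at h2 n3
    have n4 : (x1 : F) + x2 ≠ 0 := fun h => n3 (by rw [h, neg_zero])
    refine ⟨mul_ne_zero n2 (inv_ne_zero n1), ?_, ?_⟩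
    · intro h
      apply n4
      field_simp at h
      linear_combination h
    · rw [inv_neg] at h2
      field_simp at h2 ⊢
      linear_combination h2
  · rintro ⟨x1, x2, x3⟩ h ⟨y1, y2, y3⟩ h' e
    simp only [mem_filter, mem_univ, true_and, Prod.mk.injEq] at h h' e ⊢
    obtain ⟨rfl, e⟩ := e
    have n1 := x1.ne_zero
    have e2 : (x2 : F) = y2 := mul_right_cancel₀ (inv_ne_zero n1) e
    refine ⟨rfl, Units.ext e2, Units.ext ?_⟩
    linear_combination h.1 - h'.1 - e2
  · rintro ⟨x1, s⟩ h
    simp only [mem_filter, mem_univ, true_and, mem_product] at h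
    obtain ⟨h1, h2, h3⟩ := h
    have n1 := x1.ne_zero
    refine ⟨⟨x1, Units.mk0 (s * x1) (mul_ne_zero h1 n1),
      Units.mk0 (-(1 + s) * x1) (mul_ne_zero (neg_ne_zero.2 h2) n1)⟩, ?_, ?_⟩
    · simp only [mem_filter, mem_univ, true_and, Units.val_mk0]
      refine ⟨by ring, ?_⟩
      rw [neg_mul, inv_neg]
      field_simp
      linear_combination h3
    · simp only [Units.val_mk0, Prod.mk.injEq, true_and]
      field_simp

theorem hmuR_swap12 (a1 a2 a3 : F) : hmuR a2 a1 a3 = hmuR a1 a2 a3 := by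
  refine Finset.card_bij (fun x _ => (x.2.1, x.1, x.2.2)) ?_ ?_ ?_
  · rintro ⟨x1, x2, x3⟩ h
    simp only [mem_filter, mem_univ, true_and] at h ⊢
    exact ⟨by linear_combination h.1, by linear_combination h.2⟩
  · rintro ⟨x1, x2, x3⟩ h ⟨y1, y2, y3⟩ h' e
    simp only [Prod.mk.injEq] at e ⊢
    tauto
  · rintro ⟨x1, x2, x3⟩ h
    simp only [mem_filter, mem_univ, true_and] at h
    refine ⟨(x2, x1, x3), ?_, rfl⟩
    simp only [mem_filter, mem_univ, true_and]
    exact ⟨by linear_combination h.1, by linear_combination h.2⟩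

theorem hmuR_swap23 (a1 a2 a3 : F) : hmuR a1 a3 a2 = hmuR a1 a2 a3 := by
  refine Finset.card_bij (fun x _ => (x.1, x.2.2, x.2.1)) ?_ ?_ ?_
  · rintro ⟨x1, x2, x3⟩ h
    simp only [mem_filter, mem_univ, true_and] at h ⊢
    exact ⟨by linear_combination h.1, by linear_combination h.2⟩
  · rintro ⟨x1, x2, x3⟩ h ⟨y1, y2, y3⟩ h' e
    simp only [Prod.mk.injEq] at e ⊢
    tauto
  · rintro ⟨x1, x2, x3⟩ h
    simp only [mem_filter, mem_univ, true_and] at h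
    refine ⟨(x1, x3, x2), ?_, rfl⟩
    simp only [mem_filter, mem_univ, true_and]
    exact ⟨by linear_combination h.1, by linear_combination h.2⟩

theorem hmuK_swap12 (N : K →*₀ F) (w1 w2 w3 : F) (v1 v2 v3 : K) :
    hmuK N w2 w1 w3 v2 v1 v3 = hmuK N w1 w2 w3 v1 v2 v3 := by
  refine Finset.card_bij (fun x _ => (x.2.1, x.1, x.2.2)) ?_ ?_ ?_
  · rintro ⟨x1, x2, x3⟩ h
    simp only [mem_filter, mem_univ, true_and] at h ⊢
    exact ⟨h.2.1, h.1, h.2.2.1, by linear_combination h.2.2.2⟩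
  · rintro ⟨x1, x2, x3⟩ h ⟨y1, y2, y3⟩ h' e
    simp only [Prod.mk.injEq] at e ⊢
    tauto
  · rintro ⟨x1, x2, x3⟩ h
    simp only [mem_filter, mem_univ, true_and] at h
    refine ⟨(x2, x1, x3), ?_, rfl⟩
    simp only [mem_filter, mem_univ, true_and]
    exact ⟨h.2.1, h.1, h.2.2.1, by linear_combination h.2.2.2⟩

theorem hmuK_swap23 (N : K →*₀ F) (w1 w2 w3 : F) (v1 v2 v3 : K) :
    hmuK N w1 w3 w2 v1 v3 v2 = hmuK N w1 w2 w3 v1 v2 v3 := by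
  refine Finset.card_bij (fun x _ => (x.1, x.2.2, x.2.1)) ?_ ?_ ?_
  · rintro ⟨x1, x2, x3⟩ h
    simp only [mem_filter, mem_univ, true_and] at h ⊢
    exact ⟨h.1, h.2.2.1, h.2.1, by linear_combination h.2.2.2⟩
  · rintro ⟨x1, x2, x3⟩ h ⟨y1, y2, y3⟩ h' e
    simp only [Prod.mk.injEq] at e ⊢
    tauto
  · rintro ⟨x1, x2, x3⟩ h
    simp only [mem_filter, mem_univ, true_and] at h
    refine ⟨(x1, x3, x2), ?_, rfl⟩
    simp only [mem_filter, mem_univ, true_and]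
    exact ⟨h.1, h.2.2.1, h.2.1, by linear_combination h.2.2.2⟩

theorem hmuK_interior (N : K →*₀ F) (hneg : ∀ x, N (-x) = N x) (w1 w2 w3 : F) (v1 v2 v3 : K)
    (hw1 : w1 ≠ 0) (hv1 : v1 ≠ 0) (hv2 : v2 ≠ 0) (hv3 : v3 ≠ 0) :
    hmuK N w1 w2 w3 v1 v2 v3 = #{r : K | N r = w1} *
      #{s : K | N s = w2 * N v2 / (w1 * N v1) ∧ N (1 + s) = w3 * N v3 / (w1 * N v1)} := by
  have m1 : N v1 ≠ 0 := (map_ne_zero N).2 hv1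
  have m2 : N v2 ≠ 0 := (map_ne_zero N).2 hv2
  have m3 : N v3 ≠ 0 := (map_ne_zero N).2 hv3
  rw [hmuK, ← Finset.card_product]
  refine Finset.card_bij (fun r _ => (r.1, r.2.1 * v2 / (r.1 * v1))) ?_ ?_ ?_
  · rintro ⟨r1, r2, r3⟩ h
    simp only [mem_filter, mem_univ, true_and, mem_product] at h ⊢
    obtain ⟨h1, h2, h3, h4⟩ := h
    have n1 : r1 ≠ 0 := by
      rintro rfl
      exact hw1 (by rw [← h1, map_zero])
    refine ⟨h1, ?_, ?_⟩
    · rw [map_div₀, map_mul, map_mul, h1, h2]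
    · have : 1 + r2 * v2 / (r1 * v1) = -(r3 * v3 / (r1 * v1)) := by
        field_simp
        linear_combination h4
      rw [this, hneg, map_div₀, map_mul, map_mul, h1, h3]
  · rintro ⟨x1, x2, x3⟩ h ⟨y1, y2, y3⟩ h' e
    simp only [mem_filter, mem_univ, true_and, Prod.mk.injEq] at h h' e ⊢
    obtain ⟨rfl, e⟩ := e
    have n1 : x1 ≠ 0 := by
      rintro rfl
      exact hw1 (by rw [← h.1, map_zero])
    have e2 : x2 = y2 := by
      field_simp at e
      exact e
    subst e2
    refine ⟨rfl, rfl, mul_right_cancel₀ hv3 ?_⟩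
    linear_combination h.2.2.2 - h'.2.2.2
  · rintro ⟨r1, s⟩ h
    simp only [mem_filter, mem_univ, true_and, mem_product] at h
    obtain ⟨h1, h2, h3⟩ := h
    have n1 : r1 ≠ 0 := by
      rintro rfl
      exact hw1 (by rw [← h1, map_zero])
    refine ⟨⟨r1, s * r1 * v1 / v2, -((1 + s) * r1 * v1 / v3)⟩, ?_, ?_⟩
    · simp only [mem_filter, mem_univ, true_and]
      refine ⟨h1, ?_, ?_, ?_⟩
      · rw [map_div₀, map_mul, map_mul, h1, h2]
        field_simp
      · rw [hneg, map_div₀, map_mul, map_mul, h1, h3]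
        field_simp
      · field_simp
        ring
    · simp only [Prod.mk.injEq, true_and]
      field_simp

variable {R : Type*} [CommRing R]

theorem hmu_pointwise (q : ℕ) (hq : (q : R) = 0) (hF : Fintype.card F = q)
    (N : K →*₀ F) (hneg : ∀ x, N (-x) = N x) (hfib : ∀ a : F, a ≠ 0 → #{x : K | N x = a} = q + 1)
    (hquad : ∀ b c : F, #{s : F | s ^ 2 + b * s + c = 0} +
      #{s : K | N s = c ∧ N (1 + s) = 1 - b + c} = 2)
    (w1 w2 w3 : F) (hw1 : w1 ≠ 0) (hw2 : w2 ≠ 0) (hw3 : w3 ≠ 0) (v1 v2 v3 : K) :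
    (hmuR (w1 * N v1) (w2 * N v2) (w3 * N v3) : R) = hmuK N w1 w2 w3 v1 v2 v3 +
      (1 - (if v1 = 0 then 0 else 1) - (if v2 = 0 then 0 else 1) - (if v3 = 0 then 0 else 1)) := by
  have hU : ((Fintype.card Fˣ : ℕ) : R) = -1 := by
    have : Fintype.card Fˣ + 1 = q := by
      rw [Fintype.card_units, ← hF]
      exact Nat.sub_add_cancel Fintype.card_pos
    have h2 : ((Fintype.card Fˣ + 1 : ℕ) : R) = q := by rw [this]
    push_cast at h2
    linear_combination h2 + hq
  -- all coordinates nonzero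
  have Cnnn : ∀ (w1 w2 w3 : F), w1 ≠ 0 → w2 ≠ 0 → w3 ≠ 0 → ∀ v1 v2 v3 : K,
      v1 ≠ 0 → v2 ≠ 0 → v3 ≠ 0 →
      (hmuR (w1 * N v1) (w2 * N v2) (w3 * N v3) : R) = hmuK N w1 w2 w3 v1 v2 v3 - 2 := by
    intro w1 w2 w3 hw1 hw2 hw3 v1 v2 v3 hv1 hv2 hv3
    have m1 : N v1 ≠ 0 := (map_ne_zero N).2 hv1
    have m2 : N v2 ≠ 0 := (map_ne_zero N).2 hv2
    have m3 : N v3 ≠ 0 := (map_ne_zero N).2 hv3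
    rw [hmuK_interior N hneg w1 w2 w3 v1 v2 v3 hw1 hv1 hv2 hv3, hmuR_eq, hfib w1 hw1]
    set c := w2 * N v2 / (w1 * N v1) with hc
    set d := w3 * N v3 / (w1 * N v1) with hd
    have := hquad (1 + c - d) c
    rw [show 1 - (1 + c - d) + c = d by ring] at this
    have e : #{s : F | s ≠ 0 ∧ 1 + s ≠ 0 ∧
        (w1 * N v1 * s + w2 * N v2) * (1 + s) = w3 * N v3 * s} =
        #{s : F | s ^ 2 + (1 + c - d) * s + c = 0} := by
      congr 1
      ext s
      simp only [mem_filter, mem_univ, true_and]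
      have e1 : w2 * N v2 = c * (w1 * N v1) := by rw [hc]; field_simp
      have e2 : w3 * N v3 = d * (w1 * N v1) := by rw [hd]; field_simp
      have c0 : c ≠ 0 := by rw [hc]; positivity
      have d0 : d ≠ 0 := by rw [hd]; positivity
      rw [e1, e2]
      constructor
      · rintro ⟨-, -, h⟩
        have : (w1 * N v1) * (s ^ 2 + (1 + c - d) * s + c) = 0 := by linear_combination h
        exact (mul_eq_zero.1 this).resolve_left (mul_ne_zero hw1 m1)
      · intro h
        refine ⟨?_, ?_, by linear_combination (w1 * N v1) * h⟩
        · rintro rfl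
          apply c0
          linear_combination h
        · intro h1
          apply d0
          have : s = -1 := by linear_combination h1
          rw [this] at h
          linear_combination h
    rw [e]
    have t2 : ((_ : ℕ) : R) = ((2 : ℕ) : R) := congrArg Nat.cast this
    push_cast at t2 ⊢
    rw [hU, hq]
    linear_combination -t2
  have Cnn0 : ∀ (w1 w2 w3 : F), w1 ≠ 0 → w2 ≠ 0 → w3 ≠ 0 → ∀ v1 v2 : K,
      v1 ≠ 0 → v2 ≠ 0 →
      (hmuR (w1 * N v1) (w2 * N v2) (w3 * N 0) : R) = hmuK N w1 w2 w3 v1 v2 0 - 1 := by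
    intro w1 w2 w3 hw1 hw2 hw3 v1 v2 hv1 hv2
    have m1 : N v1 ≠ 0 := (map_ne_zero N).2 hv1
    have m2 : N v2 ≠ 0 := (map_ne_zero N).2 hv2
    rw [hmuR_eq]
    by_cases h12 : w1 * N v1 = w2 * N v2
    · have e1 : #{s : F | s ≠ 0 ∧ 1 + s ≠ 0 ∧
        (w1 * N v1 * s + w2 * N v2) * (1 + s) = w3 * N 0 * s} = 0 := by
        rw [Finset.card_eq_zero, Finset.filter_eq_empty_iff]
        rintro s - ⟨h1, h2, h3⟩
        rw [map_zero, ← h12] at h3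
        have : (w1 * N v1) * (1 + s) ^ 2 = 0 := by linear_combination h3
        exact mul_ne_zero (mul_ne_zero hw1 m1) (pow_ne_zero 2 h2) this
      have e2 : hmuK N w1 w2 w3 v1 v2 0 = #{x : K | N x = w1} * #{x : K | N x = w3} := by
        rw [hmuK, ← Finset.card_product]
        refine Finset.card_bij (fun r _ => (r.1, r.2.2)) ?_ ?_ ?_
        · rintro ⟨r1, r2, r3⟩ h
          simp only [mem_filter, mem_univ, true_and, mem_product] at h ⊢
          tauto
        · rintro ⟨x1, x2, x3⟩ h ⟨y1, y2, y3⟩ h' e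
          simp only [mem_filter, mem_univ, true_and, Prod.mk.injEq] at h h' e ⊢
          obtain ⟨rfl, rfl⟩ := e
          refine ⟨rfl, mul_right_cancel₀ hv2 ?_, rfl⟩
          linear_combination h.2.2.2 - h'.2.2.2
        · rintro ⟨r1, r3⟩ h
          simp only [mem_filter, mem_univ, true_and, mem_product] at h
          refine ⟨⟨r1, -(r1 * v1 / v2), r3⟩, ?_, rfl⟩
          simp only [mem_filter, mem_univ, true_and]
          refine ⟨h.1, ?_, h.2, ?_⟩
          · rw [hneg, map_div₀, map_mul, h.1, h12]
            field_simp
          · field_simp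
            ring
      rw [e1, e2, hfib w1 hw1, hfib w3 hw3]
      push_cast
      rw [hq]; ring
    · have e1 : #{s : F | s ≠ 0 ∧ 1 + s ≠ 0 ∧
        (w1 * N v1 * s + w2 * N v2) * (1 + s) = w3 * N 0 * s} = 1 := by
        rw [Finset.card_eq_one]
        refine ⟨-(w2 * N v2 / (w1 * N v1)), ?_⟩
        ext s
        simp only [mem_filter, mem_univ, true_and, mem_singleton, map_zero]
        constructor
        · rintro ⟨h1, h2, h3⟩
          have : w1 * N v1 * s + w2 * N v2 = 0 := by
            refine (mul_eq_zero.1 (?_ : _ * (1 + s) = 0)).resolve_right h2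
            linear_combination h3
          field_simp
          linear_combination this
        · rintro rfl
          refine ⟨neg_ne_zero.2 (by positivity), ?_, ?_⟩
          · intro h
            apply h12
            field_simp at h
            linear_combination h
          · have : w1 * N v1 * -(w2 * N v2 / (w1 * N v1)) + w2 * N v2 = 0 := by
              field_simp
              ring
            rw [this]; ring
      have e2 : hmuK N w1 w2 w3 v1 v2 0 = 0 := by
        rw [hmuK, Finset.card_eq_zero, Finset.filter_eq_empty_iff]
        rintro ⟨r1, r2, r3⟩ - ⟨h1, h2, h3, h4⟩
        apply h12
        simp only at h1 h2 h3 h4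
        rw [← h1, ← h2, ← map_mul, ← map_mul, ← hneg (r2 * v2)]
        congr 1
        linear_combination h4
      rw [e1, e2, Nat.cast_mul, hU]; simp
  have Cn00 : ∀ (w1 w2 w3 : F), w1 ≠ 0 → w2 ≠ 0 → w3 ≠ 0 → ∀ v1 : K, v1 ≠ 0 →
      (hmuR (w1 * N v1) (w2 * N 0) (w3 * N 0) : R) = hmuK N w1 w2 w3 v1 0 0 := by
    intro w1 w2 w3 hw1 hw2 hw3 v1 hv1
    have m1 : N v1 ≠ 0 := (map_ne_zero N).2 hv1
    have e1 : hmuR (w1 * N v1) (w2 * N 0) (w3 * N 0) = 0 := by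
      rw [hmuR, Finset.card_eq_zero, Finset.filter_eq_empty_iff]
      rintro ⟨x1, x2, x3⟩ - ⟨h1, h2⟩
      simp [hw1, hv1] at h2
    have e2 : hmuK N w1 w2 w3 v1 0 0 = 0 := by
      rw [hmuK, Finset.card_eq_zero, Finset.filter_eq_empty_iff]
      rintro ⟨r1, r2, r3⟩ - ⟨h1, h2, h3, h4⟩
      simp only at h1 h2 h3 h4
      have : r1 = 0 := by simpa [hv1] using h4
      rw [this, map_zero] at h1
      exact hw1 h1.symm
    rw [e1, e2]
  have C000 : (hmuR (w1 * N 0) (w2 * N 0) (w3 * N 0) : R) = hmuK N w1 w2 w3 0 0 0 + 1 := by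
    have e1 : #{s : F | s ≠ 0 ∧ 1 + s ≠ 0 ∧
        (w1 * N 0 * s + w2 * N 0) * (1 + s) = w3 * N 0 * s} + 2 = q := by
      rw [← hF, ← Finset.card_univ]
      have : ({s : F | s ≠ 0 ∧ 1 + s ≠ 0 ∧
        (w1 * N 0 * s + w2 * N 0) * (1 + s) = w3 * N 0 * s} : Finset F) = {0, -1}ᶜ := by
        ext s
        simp only [mem_filter, mem_univ, true_and, map_zero, mem_compl, mem_insert, mem_singleton,
          not_or]
        constructor
        · rintro ⟨h1, h2, -⟩
          exact ⟨h1, fun h => h2 (by rw [h]; ring)⟩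
        · rintro ⟨h1, h2⟩
          exact ⟨h1, fun h => h2 (by linear_combination h), by ring⟩
      rw [this]
      have h2 : #({0, -1} : Finset F) = 2 := Finset.card_pair (by simp)
      have := Finset.card_compl_add_card ({0, -1} : Finset F)
      rw [h2] at this
      rw [this, Finset.card_univ]
    have e2 : hmuK N w1 w2 w3 0 0 0 = #{x : K | N x = w1} * (#{x : K | N x = w2} *
        #{x : K | N x = w3}) := by
      rw [hmuK, ← Finset.card_product, ← Finset.card_product]
      congr 1
      ext ⟨r1, r2, r3⟩
      simp
    rw [hmuR_eq, e2, hfib _ hw1, hfib _ hw2, hfib _ hw3]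
    have h2 : ((_ : ℕ) : R) = ((q : ℕ) : R) := congrArg Nat.cast e1
    push_cast at h2 ⊢
    rw [hU]
    rw [hq] at h2 ⊢
    linear_combination -h2
  by_cases h1 : v1 = 0 <;> by_cases h2 : v2 = 0 <;> by_cases h3 : v3 = 0
  · subst h1 h2 h3
    rw [C000]; simp
  · subst h1 h2
    rw [← hmuR_swap23, ← hmuR_swap12, ← hmuK_swap23, ← hmuK_swap12, Cn00 _ _ _ hw3 hw1 hw2 _ h3]
    simp [h3]
  · subst h1 h3
    rw [← hmuR_swap12, ← hmuK_swap12, Cn00 _ _ _ hw2 hw1 hw3 _ h2]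
    simp [h2]
  · subst h1
    rw [← hmuR_swap12, ← hmuK_swap12, ← hmuR_swap23, ← hmuK_swap23,
      Cnn0 _ _ _ hw2 hw3 hw1 _ _ h2 h3]
    simp only [h2, h3, if_true, if_false]
    ring
  · subst h2 h3
    rw [Cn00 _ _ _ hw1 hw2 hw3 _ h1]
    simp [h1]
  · subst h2
    rw [← hmuR_swap23, ← hmuK_swap23, Cnn0 _ _ _ hw1 hw3 hw2 _ _ h1 h3]
    simp only [h1, h3, if_true, if_false]
    ring
  · subst h3
    rw [Cnn0 _ _ _ hw1 hw2 hw3 _ _ h1 h2]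
    simp only [h1, h2, if_true, if_false]
    ring
  · rw [Cnnn _ _ _ hw1 hw2 hw3 _ _ _ h1 h2 h3]
    simp only [h1, h2, h3, if_false]
    ring

/-- weighted count of the points on the diagonal Hermitian cone -/
def hmuS (N : K →*₀ F) (f : K × K × K → R) (u : Fˣ × Fˣ × Fˣ) : R :=
  ∑ v : K × K × K, if (u.1 : F) * N v.1 + u.2.1 * N v.2.1 + u.2.2 * N v.2.2 = 0 then f v else 0

theorem hmu_sum_coord (f : K × K × K → R) (hf0 : ∑ v, f v = 0)
    (hf : ∀ r : K × K × K, r ≠ 0 →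
      ∑ v : K × K × K, (if r.1 * v.1 + r.2.1 * v.2.1 + r.2.2 * v.2.2 = 0 then f v else 0) = 0) :
    (∑ v : K × K × K, f v * (if v.1 = 0 then 0 else 1) = 0) ∧
    (∑ v : K × K × K, f v * (if v.2.1 = 0 then 0 else 1) = 0) ∧
    (∑ v : K × K × K, f v * (if v.2.2 = 0 then 0 else 1) = 0) := by
  refine ⟨?_, ?_, ?_⟩
  · have h := hf (1, 0, 0) (by simp)
    refine Eq.trans ?_ (sub_eq_zero.2 (hf0.trans h.symm))
    rw [← Finset.sum_sub_distrib]
    refine Finset.sum_congr rfl fun v _ => ?_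
    by_cases hv : v.1 = 0 <;> simp [hv]
  · have h := hf (0, 1, 0) (by simp)
    refine Eq.trans ?_ (sub_eq_zero.2 (hf0.trans h.symm))
    rw [← Finset.sum_sub_distrib]
    refine Finset.sum_congr rfl fun v _ => ?_
    by_cases hv : v.2.1 = 0 <;> simp [hv]
  · have h := hf (0, 0, 1) (by simp)
    refine Eq.trans ?_ (sub_eq_zero.2 (hf0.trans h.symm))
    rw [← Finset.sum_sub_distrib]
    refine Finset.sum_congr rfl fun v _ => ?_
    by_cases hv : v.2.2 = 0 <;> simp [hv]

theorem hmu_main (q : ℕ) (hq : (q : R) = 0) (hF : Fintype.card F = q)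
    (N : K →*₀ F) (hneg : ∀ x, N (-x) = N x) (hfib : ∀ a : F, a ≠ 0 → #{x : K | N x = a} = q + 1)
    (hquad : ∀ b c : F, #{s : F | s ^ 2 + b * s + c = 0} +
      #{s : K | N s = c ∧ N (1 + s) = 1 - b + c} = 2)
    (f : K × K × K → R) (hf0 : ∑ v, f v = 0)
    (hf : ∀ r : K × K × K, r ≠ 0 →
      ∑ v : K × K × K, (if r.1 * v.1 + r.2.1 * v.2.1 + r.2.2 * v.2.2 = 0 then f v else 0) = 0)
    (w : Fˣ × Fˣ × Fˣ) :
    ∑ x : Fˣ × Fˣ × Fˣ, (if (x.1 : F) + x.2.1 + x.2.2 = 0 then hmuS N f (w / x) else 0) = 0 := by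
  have h1 : ∑ x : Fˣ × Fˣ × Fˣ, (if (x.1 : F) + x.2.1 + x.2.2 = 0 then hmuS N f (w / x) else 0)
      = ∑ v : K × K × K, f v * (hmuR (w.1 * N v.1) (w.2.1 * N v.2.1) (w.2.2 * N v.2.2) : R) := by
    simp only [hmuR, Finset.card_filter, Nat.cast_sum, Finset.mul_sum]
    rw [Finset.sum_comm]
    refine Finset.sum_congr rfl fun x _ => ?_
    by_cases hx : (x.1 : F) + x.2.1 + x.2.2 = 0
    · simp only [hx, if_true, true_and, hmuS]
      refine Finset.sum_congr rfl fun v _ => ?_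
      have : ((w / x).1 : F) * N v.1 + (w / x).2.1 * N v.2.1 + (w / x).2.2 * N v.2.2 =
          w.1 * N v.1 * (x.1 : F)⁻¹ + w.2.1 * N v.2.1 * (x.2.1 : F)⁻¹ +
          w.2.2 * N v.2.2 * (x.2.2 : F)⁻¹ := by
        simp only [Prod.fst_div, Prod.snd_div, Units.val_div_eq_div_val]
        simp only [div_eq_mul_inv]
        ring
      rw [this]
      split_ifs <;> simp
    · simp [hx]
  rw [h1]
  simp only [hmu_pointwise q hq hF N hneg hfib hquad _ _ _ w.1.ne_zero w.2.1.ne_zero w.2.2.ne_zero]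
  have hK0 : ∑ v : K × K × K, f v * (hmuK N w.1 w.2.1 w.2.2 v.1 v.2.1 v.2.2 : R) = 0 := by
    simp only [hmuK, Finset.card_filter, Nat.cast_sum, Finset.mul_sum]
    rw [Finset.sum_comm]
    refine Finset.sum_eq_zero fun r _ => ?_
    by_cases hr : N r.1 = w.1 ∧ N r.2.1 = w.2.1 ∧ N r.2.2 = w.2.2
    · have hr0 : r ≠ 0 := by
        rintro rfl
        have := hr.1
        simp only [Prod.fst_zero, map_zero] at this
        exact w.1.ne_zero this.symm
      refine Eq.trans ?_ (hf r hr0)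
      refine Finset.sum_congr rfl fun v _ => ?_
      simp only [hr, true_and]
      split_ifs <;> simp
    · refine Finset.sum_eq_zero fun v _ => ?_
      rw [if_neg (by tauto)]
      simp
  obtain ⟨c1, c2, c3⟩ := hmu_sum_coord f hf0 hf
  simp only [mul_add, mul_sub, Finset.sum_add_distrib, Finset.sum_sub_distrib, hK0, c1, c2, c3,
    mul_one, hf0]
  simp

theorem hmu_axis (q : ℕ) (hq : (q : R) = 0) (hF : Fintype.card F = q)
    (N : K →*₀ F) (hneg : ∀ x, N (-x) = N x) (hfib : ∀ a : F, a ≠ 0 → #{x : K | N x = a} = q + 1)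
    (f : K × K × K → R) (hf0 : ∑ v, f v = 0)
    (hf : ∀ r : K × K × K, r ≠ 0 →
      ∑ v : K × K × K, (if r.1 * v.1 + r.2.1 * v.2.1 + r.2.2 * v.2.2 = 0 then f v else 0) = 0)
    (u1 u2 : Fˣ) : ∑ u3 : Fˣ, hmuS N f (u1, u2, u3) = 0 := by
  have hU : ((Fintype.card Fˣ : ℕ) : R) = -1 := by
    have : Fintype.card Fˣ + 1 = q := by
      rw [Fintype.card_units, ← hF]
      exact Nat.sub_add_cancel Fintype.card_pos
    have h2 : ((Fintype.card Fˣ + 1 : ℕ) : R) = q := by rw [this]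
    push_cast at h2
    linear_combination h2 + hq
  have n1 := u1.ne_zero
  have n2 := u2.ne_zero
  have hcone : ∑ v : K × K × K, f v * (if (u1 : F) * N v.1 + u2 * N v.2.1 = 0 then 1 else 0)
      = 0 := by
    have e : ∀ v : K × K × K, (if (u1 : F) * N v.1 + u2 * N v.2.1 = 0 then (1 : R) else 0) =
        ∑ ρ : K, if N ρ = -(u1 : F) / u2 ∧ ρ * v.1 + -1 * v.2.1 + 0 * v.2.2 = 0 then 1 else 0 := by
      rintro ⟨v1, v2, v3⟩
      simp only
      rw [Finset.sum_boole]
      by_cases h1 : v1 = 0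
      · subst h1
        by_cases h2 : v2 = 0
        · subst h2
          simp only [map_zero, mul_zero, zero_mul, add_zero, if_true, and_true]
          rw [hfib _ (div_ne_zero (neg_ne_zero.2 n1) n2)]
          push_cast
          rw [hq]; ring
        · simp [h2]
      · have m1 : N v1 ≠ 0 := (map_ne_zero N).2 h1
        by_cases hc : (u1 : F) * N v1 + u2 * N v2 = 0
        · rw [if_pos hc]
          have : ({ρ : K | N ρ = -(u1 : F) / u2 ∧ ρ * v1 + -1 * v2 + 0 * v3 = 0} : Finset K)
              = {v2 / v1} := by
            ext ρ
            simp only [mem_filter, mem_univ, true_and, mem_singleton]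
            constructor
            · rintro ⟨-, h⟩
              field_simp
              linear_combination h
            · rintro rfl
              refine ⟨?_, ?_⟩
              · rw [map_div₀]
                field_simp
                linear_combination hc
              · field_simp
                ring
          rw [this]; simp
        · rw [if_neg hc, Finset.filter_false_of_mem, Finset.card_empty, Nat.cast_zero]
          rintro ρ - ⟨h, h'⟩
          apply hc
          have : v2 = ρ * v1 := by linear_combination -h'
          rw [this, map_mul, h]
          field_simp
          ring
    simp only [e, Finset.mul_sum]
    rw [Finset.sum_comm]
    refine Finset.sum_eq_zero fun ρ _ => ?_
    by_cases hρ : N ρ = -(u1 : F) / u2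
    · refine Eq.trans ?_ (hf (ρ, -1, 0) (by simp))
      refine Finset.sum_congr rfl fun v _ => ?_
      simp only [hρ, true_and]
      split_ifs <;> simp
    · simp [hρ]
  obtain ⟨c1, c2, c3⟩ := hmu_sum_coord f hf0 hf
  refine Eq.trans ?_ (sub_eq_zero.2 (c3.trans hcone.symm))
  rw [← Finset.sum_sub_distrib]
  simp only [hmuS]
  rw [Finset.sum_comm]
  refine Finset.sum_congr rfl fun v _ => ?_
  rw [← mul_sub]
  have : ∀ u3 : Fˣ, (if (u1 : F) * N v.1 + u2 * N v.2.1 + u3 * N v.2.2 = 0 then f v else 0) =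
      f v * (if (u1 : F) * N v.1 + u2 * N v.2.1 + u3 * N v.2.2 = 0 then 1 else 0) := by
    intro u3; split_ifs <;> simp
  simp only [this, ← Finset.mul_sum]
  congr 1
  by_cases h3 : v.2.2 = 0
  · simp only [h3, map_zero, mul_zero, add_zero, if_true]
    rw [Finset.sum_const, Finset.card_univ, nsmul_eq_mul, hU]
    ring
  · have m3 : N v.2.2 ≠ 0 := (map_ne_zero N).2 h3
    rw [if_neg h3, Finset.sum_boole]
    by_cases hc : (u1 : F) * N v.1 + u2 * N v.2.1 = 0
    · rw [if_pos hc, Finset.filter_false_of_mem]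
      · simp
      · rintro u3 - h
        rw [hc, zero_add] at h
        exact mul_ne_zero u3.ne_zero m3 h
    · rw [if_neg hc]
      have : ({u3 : Fˣ | (u1 : F) * N v.1 + u2 * N v.2.1 + u3 * N v.2.2 = 0} : Finset Fˣ)
          = {Units.mk0 (-((u1 : F) * N v.1 + u2 * N v.2.1) / N v.2.2)
            (div_ne_zero (neg_ne_zero.2 hc) m3)} := by
        ext u3
        simp only [mem_filter, mem_univ, true_and, mem_singleton, Units.ext_iff, Units.val_mk0]
        rw [eq_div_iff m3]
        constructor
        · intro h; linear_combination h
        · intro h; linear_combination h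
      rw [this]; simp

theorem hmu_conv (q : ℕ) (hq : (q : R) = 0) (hF : Fintype.card F = q)
    (N : K →*₀ F) (hneg : ∀ x, N (-x) = N x) (hfib : ∀ a : F, a ≠ 0 → #{x : K | N x = a} = q + 1)
    (hquad : ∀ b c : F, #{s : F | s ^ 2 + b * s + c = 0} +
      #{s : K | N s = c ∧ N (1 + s) = 1 - b + c} = 2)
    (f : K × K × K → R) (hf0 : ∑ v, f v = 0)
    (hf : ∀ r : K × K × K, r ≠ 0 →
      ∑ v : K × K × K, (if r.1 * v.1 + r.2.1 * v.2.1 + r.2.2 * v.2.2 = 0 then f v else 0) = 0)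
    (w : Fˣ × Fˣ × Fˣ) :
    ∑ u : Fˣ × Fˣ × Fˣ, hmuS N f u * hmuS N f (w / u) = 0 := by
  have a3 := hmu_axis q hq hF N hneg hfib f hf0 hf
  -- permuted versions
  have a2 : ∀ u1 u3 : Fˣ, ∑ u2 : Fˣ, hmuS N f (u1, u2, u3) = 0 := by
    intro u1 u3
    let e : K × K × K ≃ K × K × K :=
      ⟨fun v => (v.1, v.2.2, v.2.1), fun v => (v.1, v.2.2, v.2.1), fun _ => rfl, fun _ => rfl⟩
    have := hmu_axis q hq hF N hneg hfib (fun v => f (e v))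
      (by rw [← hf0]; exact Equiv.sum_comp e f)
      (fun r hr => by
        refine Eq.trans ?_ (hf (e r) (fun h => hr (e.injective h)))
        rw [← Equiv.sum_comp e]
        refine Finset.sum_congr rfl fun v _ => ?_
        simp only [e, Equiv.coe_fn_mk]
        congr 2
        ring) u1 u3
    refine Eq.trans ?_ this
    refine Finset.sum_congr rfl fun u2 _ => ?_
    simp only [hmuS]
    rw [← Equiv.sum_comp e]
    refine Finset.sum_congr rfl fun v _ => ?_
    simp only [e, Equiv.coe_fn_mk]
    congr 2
    ring
  have a1 : ∀ u2 u3 : Fˣ, ∑ u1 : Fˣ, hmuS N f (u1, u2, u3) = 0 := by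
    intro u2 u3
    let e : K × K × K ≃ K × K × K :=
      ⟨fun v => (v.2.2, v.2.1, v.1), fun v => (v.2.2, v.2.1, v.1), fun _ => rfl, fun _ => rfl⟩
    have := hmu_axis q hq hF N hneg hfib (fun v => f (e v))
      (by rw [← hf0]; exact Equiv.sum_comp e f)
      (fun r hr => by
        refine Eq.trans ?_ (hf (e r) (fun h => hr (e.injective h)))
        rw [← Equiv.sum_comp e]
        refine Finset.sum_congr rfl fun v _ => ?_
        simp only [e, Equiv.coe_fn_mk]
        congr 2
        ring) u3 u2
    refine Eq.trans ?_ this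
    refine Finset.sum_congr rfl fun u2 _ => ?_
    simp only [hmuS]
    rw [← Equiv.sum_comp e]
    refine Finset.sum_congr rfl fun v _ => ?_
    simp only [e, Equiv.coe_fn_mk]
    congr 2
    ring
  have h1 : ∑ u : Fˣ × Fˣ × Fˣ, hmuS N f u * hmuS N f (w / u) =
      ∑ v : K × K × K, f v * ∑ u : Fˣ × Fˣ × Fˣ, if (w.1 : F) * (u.1 : F)⁻¹ * N v.1 +
        w.2.1 * (u.2.1 : F)⁻¹ * N v.2.1 + w.2.2 * (u.2.2 : F)⁻¹ * N v.2.2 = 0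
        then hmuS N f u else 0 := by
    simp only [Finset.mul_sum]
    rw [Finset.sum_comm]
    refine Finset.sum_congr rfl fun u _ => ?_
    conv_lhs => rw [hmuS.eq_def N f (w / u), Finset.mul_sum]
    refine Finset.sum_congr rfl fun v _ => ?_
    simp only [Prod.fst_div, Prod.snd_div, Units.val_div_eq_div_val]
    simp only [div_eq_mul_inv]
    split_ifs <;> ring
  rw [h1]
  refine Finset.sum_eq_zero fun v _ => ?_
  by_cases z1 : v.1 = 0
  · simp only [z1, map_zero, mul_zero, zero_add]
    rw [Fintype.sum_prod_type, Finset.sum_comm]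
    rw [Finset.sum_eq_zero, mul_zero]
    rintro ⟨u2, u3⟩ -
    simp only
    split_ifs
    · exact a1 u2 u3
    · simp
  by_cases z2 : v.2.1 = 0
  · simp only [z2, map_zero, mul_zero, add_zero]
    rw [Fintype.sum_prod_type, Finset.sum_eq_zero, mul_zero]
    intro u1 _
    rw [Fintype.sum_prod_type, Finset.sum_comm, Finset.sum_eq_zero]
    intro u3 _
    simp only
    split_ifs
    · exact a2 u1 u3
    · simp
  by_cases z3 : v.2.2 = 0
  · simp only [z3, map_zero, mul_zero, add_zero]
    rw [Fintype.sum_prod_type, Finset.sum_eq_zero, mul_zero]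
    intro u1 _
    rw [Fintype.sum_prod_type, Finset.sum_eq_zero]
    intro u2 _
    simp only
    split_ifs
    · exact a3 u1 u2
    · simp
  have m1 : N v.1 ≠ 0 := (map_ne_zero N).2 z1
  have m2 : N v.2.1 ≠ 0 := (map_ne_zero N).2 z2
  have m3 : N v.2.2 ≠ 0 := (map_ne_zero N).2 z3
  let n : Fˣ × Fˣ × Fˣ := (Units.mk0 _ m1, Units.mk0 _ m2, Units.mk0 _ m3)
  have := hmu_main q hq hF N hneg hfib hquad f hf0 hf (w * n)
  rw [← Equiv.sum_comp (Equiv.divLeft (w * n))] at this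
  refine Eq.trans (congrArg (f v * ·) (Eq.trans ?_ this)) (mul_zero _)
  refine Finset.sum_congr rfl fun u _ => ?_
  simp only [Equiv.divLeft_apply, div_div_cancel]
  simp only [n, Prod.fst_div, Prod.snd_div, Prod.fst_mul, Prod.snd_mul, Units.val_div_eq_div_val,
    Units.val_mul, Units.val_mk0]
  congr 2
  ring

end HMU


section HMUfield
set_option linter.unusedSectionVars false
open Finset
variable {F K : Type*} [Field F] [Field K] [Fintype F] [Fintype K] [DecidableEq F] [DecidableEq K]
  [Algebra F K]

theorem hmu_root (h2 : Module.finrank F K = 2) (b c : F) (hno : ∀ s : F, s ^ 2 + b * s + c ≠ 0) :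
    ∃ x : K, x ^ 2 + algebraMap F K b * x + algebraMap F K c = 0 := by
  let f : Polynomial F := Polynomial.X ^ 2 + Polynomial.C b * Polynomial.X + Polynomial.C c
  have hdeg : f.natDegree = 2 := by
    simp only [f]; compute_degree!
  have hi : Irreducible f := by
    refine Polynomial.irreducible_of_degree_le_three_of_not_isRoot
      (by rw [hdeg]; decide) fun s hs => hno s ?_
    simpa [f, Polynomial.IsRoot] using hs
  have : Fact (Irreducible f) := ⟨hi⟩
  have hfr : Module.finrank F (AdjoinRoot f) = 2 := by
    rw [(AdjoinRoot.powerBasis hi.ne_zero).finrank, AdjoinRoot.powerBasis_dim, hdeg]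
  obtain ⟨φ⟩ := FiniteField.nonempty_algHom_of_finrank_dvd (F := F) (K := AdjoinRoot f) (L := K)
    (by rw [hfr, h2])
  refine ⟨φ (AdjoinRoot.root f), ?_⟩
  have h : Polynomial.aeval (AdjoinRoot.root f) f = 0 := by simp
  have hroot := congrArg φ h
  rw [map_zero, ← Polynomial.aeval_algHom_apply] at hroot
  generalize φ (AdjoinRoot.root f) = y at hroot ⊢
  simpa [f] using hroot

/-- the norm as a morphism of monoids with zero -/
noncomputable def hmuN (F K : Type*) [Field F] [Field K] [Finite K] [Algebra F K] : K →*₀ F :=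
  { Algebra.norm F with
    map_zero' := Algebra.norm_zero }

theorem hmuN_apply (q : ℕ) (hF : Fintype.card F = q) (hK : Fintype.card K = q ^ 2) (x : K) :
    algebraMap F K (hmuN F K x) = x ^ (q + 1) := by
  have h := FiniteField.algebraMap_norm_eq_pow (K := F) (x := x)
  rw [Nat.card_eq_fintype_card, Nat.card_eq_fintype_card, hF, hK] at h
  have hq1 : 1 < q := hF ▸ Fintype.one_lt_card
  have : (q ^ 2 - 1) / (q - 1) = q + 1 := by
    have : q ^ 2 - 1 = (q + 1) * (q - 1) := by
      have := Nat.sq_sub_sq q 1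
      simpa using this
    rw [this, Nat.mul_div_cancel _ (by omega)]
  rw [this] at h
  exact h

theorem hmuN_fib (q : ℕ) (hF : Fintype.card F = q) (hK : Fintype.card K = q ^ 2) (a : F)
    (ha : a ≠ 0) : #{x : K | hmuN F K x = a} = q + 1 := by
  have hq1 : 1 < q := hF ▸ Fintype.one_lt_card
  let g : Kˣ →* Fˣ := Units.map (Algebra.norm F (S := K))
  have hs : Function.Surjective g := FiniteField.unitsMap_norm_surjective F K
  have e : #{x : K | hmuN F K x = a} = #{x : Kˣ | g x = Units.mk0 a ha} := by
    symm
    refine Finset.card_bij (fun x _ => (x : K)) ?_ ?_ ?_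
    · intro x hx
      simp only [mem_filter, mem_univ, true_and, Units.ext_iff] at hx ⊢
      exact hx
    · intro x _ y _ h
      exact Units.ext h
    · intro x hx
      simp only [mem_filter, mem_univ, true_and] at hx
      have x0 : x ≠ 0 := by
        rintro rfl
        rw [map_zero] at hx
        exact ha hx.symm
      refine ⟨Units.mk0 x x0, ?_, rfl⟩
      simp only [mem_filter, mem_univ, true_and, Units.ext_iff]
      exact hx
  rw [e]
  have hall : ∀ y : Fˣ, #{x : Kˣ | g x = y} = #{x : Kˣ | g x = Units.mk0 a ha} := fun y =>
    MonoidHom.card_fiber_eq_of_mem_range g (hs y) (hs _)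
  have htot := Finset.card_eq_sum_card_fiberwise (f := g) (s := univ) (t := univ) (by simp)
  rw [Finset.sum_congr rfl (fun y _ => hall y), Finset.sum_const, Finset.card_univ,
    Finset.card_univ, Fintype.card_units, Fintype.card_units, hF, hK, smul_eq_mul] at htot
  have h3 : q ^ 2 - 1 = (q - 1) * (q + 1) := by
    have := Nat.sq_sub_sq q 1
    rw [mul_comm]
    simpa using this
  rw [h3] at htot
  exact (Nat.eq_of_mul_eq_mul_left (by omega) htot).symm

theorem hmu_fixed (q : ℕ) (hF : Fintype.card F = q) (x : K) (hx : x ^ q = x) :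
    ∃ y : F, algebraMap F K y = x := by
  classical
  have hq1 : 1 < q := hF ▸ Fintype.one_lt_card
  let P : Polynomial K := Polynomial.X ^ q - Polynomial.X
  have hP : P ≠ 0 := FiniteField.X_pow_card_sub_X_ne_zero K hq1
  have hd : P.natDegree = q := FiniteField.X_pow_card_sub_X_natDegree_eq K hq1
  have hsub : (univ : Finset F).image (algebraMap F K) ⊆ P.roots.toFinset := by
    intro z hz
    obtain ⟨y, -, rfl⟩ := Finset.mem_image.1 hz
    rw [Multiset.mem_toFinset, Polynomial.mem_roots hP]
    simp only [P, Polynomial.IsRoot, Polynomial.eval_sub, Polynomial.eval_pow, Polynomial.eval_X]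
    rw [← map_pow, ← hF, FiniteField.pow_card, sub_self]
  have hc : #((univ : Finset F).image (algebraMap F K)) = q := by
    rw [Finset.card_image_of_injective _ (algebraMap F K).injective, Finset.card_univ, hF]
  have heq := Finset.eq_of_subset_of_card_le hsub (by
    rw [hc, ← hd]
    exact (Multiset.toFinset_card_le _).trans (Polynomial.card_roots' P))
  have : x ∈ P.roots.toFinset := by
    rw [Multiset.mem_toFinset, Polynomial.mem_roots hP]
    simp [P, hx]
  rw [← heq] at this
  obtain ⟨y, -, h⟩ := Finset.mem_image.1 this
  exact ⟨y, h⟩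

theorem hmu_quad (q : ℕ) (hF : Fintype.card F = q) (hK : Fintype.card K = q ^ 2)
    (hadd : ∀ x y : K, (x + y) ^ q = x ^ q + y ^ q) (b c : F) :
    #{s : F | s ^ 2 + b * s + c = 0} +
      #{s : K | hmuN F K s = c ∧ hmuN F K (1 + s) = 1 - b + c} = 2 := by
  have hq1 : 1 < q := hF ▸ Fintype.one_lt_card
  have inj := (algebraMap F K).injective
  have hfr : Module.finrank F K = 2 := by
    have := Module.card_eq_pow_finrank (K := F) (V := K)
    rw [hF, hK] at this
    exact (Nat.pow_right_injective hq1 this).symm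
  have hfix : ∀ y : F, (algebraMap F K y) ^ q = algebraMap F K y := fun y => by
    rw [← map_pow, ← hF, FiniteField.pow_card]
  have hcond : ∀ s : K, (hmuN F K s = c ∧ hmuN F K (1 + s) = 1 - b + c) ↔
      (s * s ^ q = algebraMap F K c ∧ s + s ^ q = -algebraMap F K b) := by
    intro s
    rw [← inj.eq_iff, ← inj.eq_iff, hmuN_apply q hF hK, hmuN_apply q hF hK, pow_succ, pow_succ,
      hadd, one_pow, map_add, map_sub, map_one]
    constructor
    · rintro ⟨h1, h2⟩
      exact ⟨by linear_combination h1, by linear_combination h2 - h1⟩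
    · rintro ⟨h1, h2⟩
      exact ⟨by linear_combination h1, by linear_combination h2 + h1⟩
  simp only [hcond]
  by_cases hex : ∃ s : F, s ^ 2 + b * s + c = 0
  · obtain ⟨s0, hs0⟩ := hex
    have hfac : ∀ s : K, s ^ 2 + algebraMap F K b * s + algebraMap F K c =
        (s - algebraMap F K s0) * (s - algebraMap F K (-b - s0)) := by
      intro s
      have := congrArg (algebraMap F K) hs0
      simp only [map_add, map_mul, map_pow, map_zero] at this
      rw [map_sub, map_neg]
      linear_combination this
    have e1 : ({s : F | s ^ 2 + b * s + c = 0} : Finset F) = {s0, -b - s0} := by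
      ext s
      simp only [mem_filter, mem_univ, true_and, mem_insert, mem_singleton]
      have : s ^ 2 + b * s + c = (s - s0) * (s - (-b - s0)) := by linear_combination hs0
      rw [this, mul_eq_zero, sub_eq_zero, sub_eq_zero]
    have key : ∀ s : K, (s * s ^ q = algebraMap F K c ∧ s + s ^ q = -algebraMap F K b) →
        s = algebraMap F K s0 ∧ s0 = -b - s0 := by
      rintro s ⟨h1, h2⟩
      have h0 : s ^ 2 + algebraMap F K b * s + algebraMap F K c = 0 := by
        linear_combination s * h2 - h1
      rw [hfac, mul_eq_zero, sub_eq_zero, sub_eq_zero] at h0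
      rcases h0 with h0 | h0
      · refine ⟨h0, inj ?_⟩
        rw [h0, hfix] at h2
        rw [map_sub, map_neg]
        linear_combination h2
      · have h3 : s0 = -b - s0 := by
          apply inj
          rw [h0, hfix, map_sub, map_neg] at h2
          rw [map_sub, map_neg]
          linear_combination -h2
        refine ⟨?_, h3⟩
        rw [h0, ← h3]
    rw [e1]
    by_cases hd : s0 = -b - s0
    · have e2 : ({s : K | s * s ^ q = algebraMap F K c ∧ s + s ^ q = -algebraMap F K b} : Finset K)
          = {algebraMap F K s0} := by
        ext s
        simp only [mem_filter, mem_univ, true_and, mem_singleton]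
        constructor
        · intro h
          exact (key s h).1
        · rintro rfl
          rw [hfix, ← map_mul, ← map_add, ← map_neg]
          refine ⟨congrArg _ ?_, congrArg _ ?_⟩
          · linear_combination -hs0 + s0 * hd
          · linear_combination hd
      rw [e2, ← hd]
      simp
    · have e2 : ({s : K | s * s ^ q = algebraMap F K c ∧ s + s ^ q = -algebraMap F K b} : Finset K)
          = ∅ := by
        rw [Finset.filter_eq_empty_iff]
        intro s _ h
        exact hd (key s h).2
      rw [e2, Finset.card_pair hd]
      simp
  · have e1 : ({s : F | s ^ 2 + b * s + c = 0} : Finset F) = ∅ := by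
      rw [Finset.filter_eq_empty_iff]
      intro s _ h
      exact hex ⟨s, h⟩
    obtain ⟨x, hx⟩ := hmu_root (K := K) hfr b c (fun s h => hex ⟨s, h⟩)
    have hxq : (x ^ q) ^ 2 + algebraMap F K b * x ^ q + algebraMap F K c = 0 := by
      have := congrArg (· ^ q) hx
      simp only [hadd, mul_pow, hfix, zero_pow (by omega : q ≠ 0)] at this
      rw [← this]
      ring
    have hne : x ≠ x ^ q := by
      intro h
      obtain ⟨y, rfl⟩ := hmu_fixed (F := F) q hF x h.symm
      refine hex ⟨y, inj ?_⟩
      simpa using hx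
    have hsum : x + x ^ q = -algebraMap F K b := by
      have : (x - x ^ q) * (x + x ^ q + algebraMap F K b) = 0 := by linear_combination hx - hxq
      have := (mul_eq_zero.1 this).resolve_left (sub_ne_zero.2 hne)
      linear_combination this
    have hprod : x * x ^ q = algebraMap F K c := by
      linear_combination x * hsum - hx
    have hqq : (x ^ q) ^ q = x := by
      rw [← pow_mul, ← sq, ← hK, FiniteField.pow_card]
    have e2 : ({s : K | s * s ^ q = algebraMap F K c ∧ s + s ^ q = -algebraMap F K b} : Finset K)
        = {x, x ^ q} := by
      ext s
      simp only [mem_filter, mem_univ, true_and, mem_insert, mem_singleton]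
      constructor
      · rintro ⟨h1, h2⟩
        have : (s - x) * (s - x ^ q) = 0 := by
          linear_combination s * h2 - h1 - s * hsum + hprod
        rwa [mul_eq_zero, sub_eq_zero, sub_eq_zero] at this
      · rintro (rfl | rfl)
        · exact ⟨hprod, hsum⟩
        · rw [hqq]
          exact ⟨by linear_combination hprod, by linear_combination hsum⟩
    rw [e1, e2, Finset.card_pair hne]
    simp

end HMUfield


section HMUdiag
open Finset

theorem hmu_iso {K V : Type*} [Field K] [AddCommGroup V] [Module K V] (q : ℕ)
    (hnt : ∃ d : K, d ^ q + d ≠ 0)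
    (B : V → V → K)
    (hal : ∀ u v w, B (u + v) w = B u w + B v w) (har : ∀ u v w, B u (v + w) = B u v + B u w)
    (hsl : ∀ (c : K) u v, B (c • u) v = c * B u v) (hsr : ∀ (c : K) u v, B u (c • v) = c ^ q * B u v)
    (hh : ∀ u v, B v u = B u v ^ q)
    (W : Submodule K V) (hW : ∀ v ∈ W, B v v = 0) (v w : V) (hv : v ∈ W) (hw : w ∈ W) :
    B v w = 0 := by
  by_contra hb
  obtain ⟨d, hd⟩ := hnt
  have h := hW (v + (B v w * d) • w) (W.add_mem hv (W.smul_mem _ hw))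
  rw [hal, har, har, hsl, hsl, hsr, hsr, hW v hv, hW w hw, hh v w] at h
  have : B v w ^ (q + 1) * (d ^ q + d) = 0 := by
    rw [mul_pow] at h
    linear_combination h
  exact (mul_ne_zero (pow_ne_zero _ hb) hd) this

theorem hmu_diag {K V : Type*} [Field K] [AddCommGroup V] [Module K V] [FiniteDimensional K V]
    (hdim : Module.finrank K V = 3) (q : ℕ) (hq : q ≠ 0)
    (hnt : ∃ d : K, d ^ q + d ≠ 0)
    (B : V → V → K)
    (hal : ∀ u v w, B (u + v) w = B u w + B v w) (har : ∀ u v w, B u (v + w) = B u v + B u w)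
    (hsl : ∀ (c : K) u v, B (c • u) v = c * B u v) (hsr : ∀ (c : K) u v, B u (c • v) = c ^ q * B u v)
    (hh : ∀ u v, B v u = B u v ^ q) (hnd : ∀ v, (∀ u, B u v = 0) → v = 0) :
    ∃ (e : (K × K × K) ≃ₗ[K] V) (d1 d2 d3 : K), d1 ≠ 0 ∧ d2 ≠ 0 ∧ d3 ≠ 0 ∧
      d1 ^ q = d1 ∧ d2 ^ q = d2 ∧ d3 ^ q = d3 ∧
      ∀ x : K × K × K, B (e x) (e x) =
        d1 * x.1 ^ (q + 1) + d2 * x.2.1 ^ (q + 1) + d3 * x.2.2 ^ (q + 1) := by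
  let φ : V → V →ₗ[K] K := fun w =>
    { toFun := fun v => B v w
      map_add' := fun u v => hal u v w
      map_smul' := fun c u => hsl c u w }
  have hswap : ∀ u v, B u v = 0 → B v u = 0 := fun u v h => by rw [hh, h, zero_pow hq]
  have hex : ∀ a b : V, ∃ v, v ≠ 0 ∧ B v a = 0 ∧ B v b = 0 := by
    intro a b
    have : LinearMap.ker ((φ a).prod (φ b)) ≠ ⊥ := by
      apply LinearMap.ker_ne_bot_of_finrank_lt
      rw [hdim]; simp
    obtain ⟨v, hv, h0⟩ := Submodule.exists_mem_ne_zero_of_ne_bot this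
    rw [LinearMap.mem_ker, LinearMap.prod_apply] at hv
    exact ⟨v, h0, congrArg Prod.fst hv, congrArg Prod.snd hv⟩
  -- first vector
  obtain ⟨v1, n1⟩ : ∃ v1, B v1 v1 ≠ 0 := by
    by_contra! hc
    obtain ⟨v, h0, -, -⟩ := hex 0 0
    exact h0 (hnd v fun u => hmu_iso q hnt B hal har hsl hsr hh ⊤ (fun v _ => hc v) u v trivial trivial)
  obtain ⟨v2, h21, n2⟩ : ∃ v2, B v2 v1 = 0 ∧ B v2 v2 ≠ 0 := by
    by_contra! hc
    obtain ⟨v, h0, hv, -⟩ := hex v1 v1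
    refine h0 (hnd v fun u => ?_)
    have hu : u = (B u v1 / B v1 v1) • v1 + (u - (B u v1 / B v1 v1) • v1) := by abel
    have hm : B (u - (B u v1 / B v1 v1) • v1) v1 = 0 := by
      have := (φ v1).map_sub u ((B u v1 / B v1 v1) • v1)
      change B _ _ = B _ _ - B _ _ at this
      rw [this, hsl]; field_simp; simp
    rw [hu, hal, hsl, hswap v v1 hv, mul_zero, zero_add]
    exact hmu_iso q hnt B hal har hsl hsr hh (LinearMap.ker (φ v1)) (fun v h => hc v h) _ v hm hv
  have h12 := hswap _ _ h21
  obtain ⟨v3, h31, h32, n3⟩ : ∃ v3, B v3 v1 = 0 ∧ B v3 v2 = 0 ∧ B v3 v3 ≠ 0 := by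
    by_contra! hc
    obtain ⟨v, h0, hv, hv'⟩ := hex v1 v2
    refine h0 (hnd v fun u => ?_)
    obtain ⟨w, hw⟩ : ∃ w, w = u - (B u v1 / B v1 v1) • v1 - (B u v2 / B v2 v2) • v2 := ⟨_, rfl⟩
    have hu : u = (B u v1 / B v1 v1) • v1 + (B u v2 / B v2 v2) • v2 + w := by rw [hw]; abel
    have e1 := congrArg (φ v1) hu
    have e2 := congrArg (φ v2) hu
    change B _ _ = B _ _ at e1 e2
    rw [hal, hal, hsl, hsl, h21, div_mul_cancel₀ _ n1] at e1
    rw [hal, hal, hsl, hsl, h12, div_mul_cancel₀ _ n2] at e2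
    have hm1 : B w v1 = 0 := by linear_combination -e1
    have hm2 : B w v2 = 0 := by linear_combination -e2
    rw [hu, hal, hal, hsl, hsl, hswap v v1 hv, hswap v v2 hv', mul_zero, mul_zero, zero_add, zero_add]
    exact hmu_iso q hnt B hal har hsl hsr hh (LinearMap.ker (φ v1) ⊓ LinearMap.ker (φ v2))
      (fun v h => hc v h.1 h.2) _ v ⟨hm1, hm2⟩ ⟨hv, hv'⟩
  have h13 := hswap _ _ h31
  have h23 := hswap _ _ h32
  let g : (K × K × K) →ₗ[K] V :=
    (LinearMap.toSpanSingleton K V v1).coprod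
      ((LinearMap.toSpanSingleton K V v2).coprod (LinearMap.toSpanSingleton K V v3))
  have hg : ∀ x, g x = x.1 • v1 + (x.2.1 • v2 + x.2.2 • v3) := fun x => by
    simp [g]
  have c1 : ∀ x, B (g x) v1 = x.1 * B v1 v1 := fun x => by
    rw [hg, hal, hal, hsl, hsl, hsl, h21, h31]; ring
  have c2 : ∀ x, B (g x) v2 = x.2.1 * B v2 v2 := fun x => by
    rw [hg, hal, hal, hsl, hsl, hsl, h12, h32]; ring
  have c3 : ∀ x, B (g x) v3 = x.2.2 * B v3 v3 := fun x => by
    rw [hg, hal, hal, hsl, hsl, hsl, h13, h23]; ring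
  have hB0 : ∀ v, B 0 v = 0 := fun v => (φ v).map_zero
  have ginj : Function.Injective g := by
    rw [injective_iff_map_eq_zero]
    intro x hx
    have a1 := c1 x
    have a2 := c2 x
    have a3 := c3 x
    rw [hx, hB0] at a1 a2 a3
    exact Prod.ext ((mul_eq_zero.1 a1.symm).resolve_right n1)
      (Prod.ext ((mul_eq_zero.1 a2.symm).resolve_right n2)
        ((mul_eq_zero.1 a3.symm).resolve_right n3))
  refine ⟨LinearMap.linearEquivOfInjective g ginj (by rw [hdim]; simp), B v1 v1, B v2 v2, B v3 v3,
    n1, n2, n3, (hh _ _).symm, (hh _ _).symm, (hh _ _).symm, fun x => ?_⟩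
  rw [LinearMap.linearEquivOfInjective_apply]
  conv_lhs => rw [hg x]
  rw [har, har, hsr, hsr, hsr, ← hg, c1, c2, c3]
  ring

theorem hmu_count {K V : Type*} [Field K] [Fintype K] [AddCommGroup V] [Module K V]
    [Fintype V] (X : Set (Projectivization K V)) :
    Nat.card {v : V // ∃ hv : v ≠ 0, Projectivization.mk K v hv ∈ X} =
      (Fintype.card K - 1) * Nat.card X := by
  classical
  have e : {v : V // ∃ hv : v ≠ 0, Projectivization.mk K v hv ∈ X} ≃ X × Kˣ :=
    (Equiv.ofBijective (fun x : X × Kˣ => (⟨x.2 • x.1.1.rep, by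
        have hv : x.2 • x.1.1.rep ≠ 0 :=
          smul_ne_zero_iff_ne _ |>.2 x.1.1.rep_nonzero
        refine ⟨hv, ?_⟩
        have : Projectivization.mk K (x.2 • x.1.1.rep) hv = x.1.1 := by
          conv_rhs => rw [← Projectivization.mk_rep x.1.1]
          rw [Projectivization.mk_eq_mk_iff]
          exact ⟨x.2, rfl⟩
        rw [this]; exact x.1.2⟩ : {v : V // ∃ hv : v ≠ 0, Projectivization.mk K v hv ∈ X}))
      ⟨by
        rintro ⟨⟨P, hP⟩, a⟩ ⟨⟨Q, hQ⟩, b⟩ h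
        have h' : a • P.rep = b • Q.rep := congrArg Subtype.val h
        have hPQ : P = Q := by
          rw [← Projectivization.mk_rep P, ← Projectivization.mk_rep Q,
            Projectivization.mk_eq_mk_iff]
          exact ⟨a⁻¹ * b, by rw [mul_smul, ← h', inv_smul_smul]⟩
        subst hPQ
        have hab : a = b := by
          have : ((a : K) - b) • P.rep = 0 := by
            rw [sub_smul, sub_eq_zero]; exact h'
          have := (smul_eq_zero.1 this).resolve_right P.rep_nonzero
          exact Units.ext (sub_eq_zero.1 this)
        rw [hab], by
        rintro ⟨v, hv, hX⟩
        obtain ⟨a, ha⟩ := Projectivization.exists_smul_eq_mk_rep K v hv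
        refine ⟨(⟨_, hX⟩, a⁻¹), Subtype.ext ?_⟩
        change a⁻¹ • (Projectivization.mk K v hv).rep = v
        rw [← ha, inv_smul_smul]⟩).symm
  rw [Nat.card_congr e, Nat.card_prod, mul_comm, Nat.card_eq_fintype_card (α := Kˣ),
    Fintype.card_units]

end HMUdiag

section HMUmain
open Finset

open Classical in
theorem hmu_sum {K V W : Type*} [Field K] [Fintype K] [AddCommGroup V] [Module K V] [Fintype V]
    [AddCommGroup W] [Module K W] [Fintype W] (e : W ≃ₗ[K] V) (X : Set (Projectivization K V))
    (g : W → ℤ) (hg0 : g 0 = 1)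
    (hg : ∀ (x : W) (hv : e x ≠ 0), g x = if Projectivization.mk K (e x) hv ∈ X then 1 else 0) :
    ∑ x, g x = 1 + ((Fintype.card K : ℤ) - 1) * Nat.card X := by
  have h1 : ∑ x, g x = ∑ v : V, g (e.symm v) :=
    (Equiv.sum_comp e.symm.toEquiv g).symm
  have h2 : ∀ v : V, g (e.symm v) = (if v = 0 then 1 else 0) +
      (if ∃ hv : v ≠ 0, Projectivization.mk K v hv ∈ X then 1 else 0) := by
    intro v
    by_cases hv : v = 0
    · subst hv
      simp [hg0]
    · have hv' : e (e.symm v) ≠ 0 := by simpa using hv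
      rw [hg _ hv']
      simp [hv]
  have h3 := hmu_count (K := K) X
  rw [Nat.card_eq_fintype_card, Fintype.card_subtype] at h3
  rw [h1, Finset.sum_congr rfl (fun v _ => h2 v), Finset.sum_add_distrib, Finset.sum_ite_eq',
    if_pos (mem_univ _), ← Finset.natCast_card_filter, h3]
  have := Fintype.card_pos (α := K)
  push_cast [Nat.cast_sub this]
  ring

open Classical in
theorem hmu_final (p t q : ℕ) (hp : p.Prime) (ht : 0 < t) (hq : q = p ^ t)
    {F K : Type*} [Field F] [Fintype F] [Field K] [Fintype K] [Algebra F K]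
    (hF : Fintype.card F = q) (hK : Fintype.card K = q ^ 2)
    (hadd : ∀ x y : K, (x + y) ^ q = x ^ q + y ^ q)
    (A : Matrix (Fin 3) (Fin 3) K)
    (hA : A.transpose = A.map (· ^ q)) (hAinv : IsUnit A.det)
    (H : Set (Projectivization K (Fin 3 → K)))
    (hH : H = {P | ∃ (v : Fin 3 → K) (hv : v ≠ 0),
        P = Projectivization.mk K v hv ∧ ∑ i, ∑ j, v i * A i j * v j ^ q = 0})
    (U : Set (Projectivization K (Fin 3 → K)))
    (hUcard : Nat.card U = q ^ 3 + 1)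
    (hline : ∀ L : Submodule K (Fin 3 → K), Module.finrank K L = 2 →
      Nat.card {P : Projectivization K (Fin 3 → K) | P ∈ U ∧ P.submodule ≤ L} = 1 ∨
      Nat.card {P : Projectivization K (Fin 3 → K) | P ∈ U ∧ P.submodule ≤ L} = q + 1) :
    Nat.card ↥(H ∩ U) ≡ 1 [MOD p ^ ((t + 1) / 2)] := by
  have hq1 : 1 < q := hF ▸ Fintype.one_lt_card
  have hq0 : q ≠ 0 := by omega
  have inj := (algebraMap F K).injective
  have hqq : ∀ x : K, (x ^ q) ^ q = x := fun x => by
    rw [← pow_mul, ← sq, ← hK, FiniteField.pow_card]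
  have hsum : ∀ {ι : Type} (s : Finset ι) (g : ι → K), (∑ i ∈ s, g i) ^ q = ∑ i ∈ s, g i ^ q := by
    intro ι s g
    induction s using Finset.induction_on with
    | empty => simp [hq0]
    | insert a s ha ih => rw [Finset.sum_insert ha, Finset.sum_insert ha, hadd, ih]
  -- d ^ q + d is not identically zero
  have hnt : ∃ d : K, d ^ q + d ≠ 0 := by
    by_contra! hc
    have h1 := hc 1
    rw [one_pow] at h1
    have hsurj : Function.Surjective (algebraMap F K) := fun x =>
      hmu_fixed q hF x (by linear_combination hc x - x * h1)
    have := Fintype.card_le_of_surjective _ hsurj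
    rw [hF, hK] at this
    nlinarith
  let B : (Fin 3 → K) → (Fin 3 → K) → K := fun u v => ∑ i, ∑ j, u i * A i j * v j ^ q
  have hal : ∀ u v w, B (u + v) w = B u w + B v w := fun u v w => by
    simp only [B, Pi.add_apply, ← Finset.sum_add_distrib, add_mul]
  have har : ∀ u v w, B u (v + w) = B u v + B u w := fun u v w => by
    simp only [B, Pi.add_apply, ← Finset.sum_add_distrib, hadd, mul_add]
  have hsl : ∀ (c : K) u v, B (c • u) v = c * B u v := fun c u v => by
    simp only [B, Pi.smul_apply, smul_eq_mul, Finset.mul_sum, mul_assoc]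
  have hsr : ∀ (c : K) u v, B u (c • v) = c ^ q * B u v := fun c u v => by
    simp only [B, Pi.smul_apply, smul_eq_mul, Finset.mul_sum, mul_pow]
    refine Finset.sum_congr rfl fun i _ => Finset.sum_congr rfl fun j _ => by ring
  have hAe : ∀ i j, A i j ^ q = A j i := fun i j => by
    have := congrFun (congrFun hA i) j
    simpa using this.symm
  have hh : ∀ u v, B v u = B u v ^ q := fun u v => by
    simp only [B, hsum, mul_pow, hqq, hAe]
    rw [Finset.sum_comm]
    refine Finset.sum_congr rfl fun i _ => Finset.sum_congr rfl fun j _ => by ring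
  have hnd : ∀ v, (∀ u, B u v = 0) → v = 0 := by
    intro v hv
    have h : A.mulVec (fun j => v j ^ q) = 0 := by
      funext i
      have := hv (Pi.single i 1)
      simp only [B] at this
      rw [Finset.sum_eq_single i] at this
      · simpa [Matrix.mulVec, dotProduct] using this
      · intro b _ hb
        simp [Pi.single_eq_of_ne hb]
      · simp
    have h0 := Matrix.eq_zero_of_mulVec_eq_zero hAinv.ne_zero h
    funext j
    exact eq_zero_of_pow_eq_zero (congrFun h0 j)
  obtain ⟨e, d1, d2, d3, n1, n2, n3, f1, f2, f3, hB⟩ :=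
    hmu_diag (K := K) (V := Fin 3 → K) (by simp) q hq0 hnt B hal har hsl hsr hh hnd
  obtain ⟨a1, rfl⟩ := hmu_fixed (F := F) q hF d1 f1
  obtain ⟨a2, rfl⟩ := hmu_fixed (F := F) q hF d2 f2
  obtain ⟨a3, rfl⟩ := hmu_fixed (F := F) q hF d3 f3
  have m1 : a1 ≠ 0 := fun h => n1 (by rw [h, map_zero])
  have m2 : a2 ≠ 0 := fun h => n2 (by rw [h, map_zero])
  have m3 : a3 ≠ 0 := fun h => n3 (by rw [h, map_zero])
  let d : Fˣ × Fˣ × Fˣ := (Units.mk0 a1 m1, Units.mk0 a2 m2, Units.mk0 a3 m3)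
  let f : K × K × K → ℤ := fun x =>
    if ∀ hv : e x ≠ 0, Projectivization.mk K (e x) hv ∈ U then 1 else 0
  have hf0 : f 0 = 1 := by simp [f]
  have hfv : ∀ x (hv : e x ≠ 0), f x = if Projectivization.mk K (e x) hv ∈ U then 1 else 0 := by
    intro x hv
    simp only [f]
    congr 1
    exact propext ⟨fun h => h hv, fun h _ => h⟩
  have hdvd1 : (q : ℤ) ∣ ∑ x, f x := by
    rw [hmu_sum e U f hf0 hfv, hUcard, hK]
    push_cast
    exact ⟨q * (q ^ 3 + 1) - q ^ 2, by ring⟩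
  have hdvd2 : ∀ r : K × K × K, r ≠ 0 →
      (q : ℤ) ∣ ∑ v, (if r.1 * v.1 + r.2.1 * v.2.1 + r.2.2 * v.2.2 = 0 then f v else 0) := by
    intro r hr
    let φ : (K × K × K) →ₗ[K] K :=
      (LinearMap.mulLeft K r.1).coprod
        ((LinearMap.mulLeft K r.2.1).coprod (LinearMap.mulLeft K r.2.2))
    have hφ : ∀ v, φ v = r.1 * v.1 + r.2.1 * v.2.1 + r.2.2 * v.2.2 := fun v => by
      simp [φ, add_assoc]
    have hφ0 : φ ≠ 0 := by
      intro h
      apply hr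
      have b1 := hφ (1, 0, 0)
      have b2 := hφ (0, 1, 0)
      have b3 := hφ (0, 0, 1)
      rw [h] at b1 b2 b3
      simp only [LinearMap.zero_apply, mul_one, mul_zero, add_zero, zero_add] at b1 b2 b3
      exact Prod.ext b1.symm (Prod.ext b2.symm b3.symm)
    let L : Submodule K (Fin 3 → K) := (LinearMap.ker φ).map (e : (K × K × K) →ₗ[K] (Fin 3 → K))
    have hL : Module.finrank K L = 2 := by
      rw [LinearEquiv.finrank_map_eq e]
      have h1 := φ.finrank_range_add_finrank_ker
      have h2 : LinearMap.range φ = ⊤ := LinearMap.range_eq_top.2 (LinearMap.surjective hφ0)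
      rw [h2, finrank_top] at h1
      simp at h1
      omega
    rw [hmu_sum e {P | P ∈ U ∧ P.submodule ≤ L}]
    · rw [hK]
      rcases hline L hL with h | h <;> rw [h] <;> push_cast
      · exact ⟨q, by ring⟩
      · exact ⟨q * (q + 1) - 1, by ring⟩
    · simp [hf0]
    · intro x hv
      have : (Projectivization.mk K (e x) hv).submodule ≤ L ↔
          r.1 * x.1 + r.2.1 * x.2.1 + r.2.2 * x.2.2 = 0 := by
        rw [Projectivization.submodule_mk, Submodule.span_singleton_le_iff_mem, ← hφ]
        simp only [L, Submodule.mem_map_equiv, LinearEquiv.symm_apply_apply, LinearMap.mem_ker]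
      rw [hfv x hv]
      simp only [Set.mem_setOf_eq, this]
      by_cases c1 : Projectivization.mk K (e x) hv ∈ U <;> simp [c1]
  let N := hmuN F K
  have hN : ∀ x, algebraMap F K (N x) = x ^ (q + 1) := hmuN_apply q hF hK
  have hneg : ∀ x, N (-x) = N x := by
    intro x
    apply inj
    rw [hN, hN, pow_succ, pow_succ]
    have := hadd x (-x)
    rw [add_neg_cancel, zero_pow hq0] at this
    linear_combination x * this
  let S : Fˣ × Fˣ × Fˣ → ℤ := hmuS N f
  have hcast : ∀ u, ((S u : ℤ) : ZMod q) = hmuS N (fun v => ((f v : ℤ) : ZMod q)) u := by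
    intro u
    simp only [S, hmuS]
    push_cast
    rfl
  have hconv : ∀ w, (p : ℤ) ^ t ∣ ∑ u, S u * S (w / u) := by
    intro w
    have h := hmu_conv (R := ZMod q) q (by simp) hF N hneg (fun a ha => by
        convert hmuN_fib (K := K) q hF hK a ha) (fun b c => by
        convert hmu_quad (K := K) q hF hK hadd b c)
      (fun v => ((f v : ℤ) : ZMod q))
      (by
        have := (ZMod.intCast_zmod_eq_zero_iff_dvd _ q).2 hdvd1
        rwa [Int.cast_sum] at this)
      (by
        intro r hr
        have := (ZMod.intCast_zmod_eq_zero_iff_dvd _ q).2 (hdvd2 r hr)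
        rw [Int.cast_sum] at this
        refine Eq.trans (Finset.sum_congr rfl fun v _ => ?_) this
        split_ifs <;> simp) w
    have h2 : ((∑ u, S u * S (w / u) : ℤ) : ZMod q) = 0 := by
      rw [← h, Int.cast_sum]
      refine Finset.sum_congr rfl fun u _ => ?_
      rw [Int.cast_mul, hcast, hcast]
    have h3 := (ZMod.intCast_zmod_eq_zero_iff_dvd _ q).1 h2
    rw [hq] at h3
    exact_mod_cast h3
  have hunit : ∀ x : Fˣ, x ^ (p ^ t) = x := fun x => by
    apply Units.ext
    rw [Units.val_pow_eq_pow_val, ← hq, ← hF, FiniteField.pow_card]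
  have hS := hmu_gr p t hp ht (T := Fˣ × Fˣ × Fˣ)
    (fun τ => Prod.ext (hunit _) (Prod.ext (hunit _) (hunit _))) t S hconv d
  have hSd : S d = 1 + ((q : ℤ) ^ 2 - 1) * Nat.card ↥(H ∩ U) := by
    have hform : ∀ x, ((d.1 : F) * N x.1 + d.2.1 * N x.2.1 + d.2.2 * N x.2.2 = 0) ↔
        B (e x) (e x) = 0 := by
      intro x
      rw [hB, ← inj.eq_iff]
      simp only [map_add, map_mul, map_zero, hN, d, Units.val_mk0]
    have := hmu_sum e (H ∩ U) (fun v => if (d.1 : F) * N v.1 + d.2.1 * N v.2.1 + d.2.2 * N v.2.2 = 0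
      then f v else 0) (by simp [hf0]) (by
        intro x hv
        have hmem : Projectivization.mk K (e x) hv ∈ H ↔ B (e x) (e x) = 0 := by
          rw [hH]
          constructor
          · rintro ⟨v, hv', h1, h2⟩
            obtain ⟨a, ha⟩ := (Projectivization.mk_eq_mk_iff K _ _ hv hv').1 h1
            have ha' : e x = (a : K) • v := ha.symm
            rw [ha', hsl, hsr]
            have h2' : B v v = 0 := h2
            rw [h2']; ring
          · intro h
            exact ⟨e x, hv, rfl, h⟩
        simp only [hform, Set.mem_inter_iff, hmem]
        rw [hfv x hv]
        by_cases c1 : Projectivization.mk K (e x) hv ∈ U <;> simp [c1])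
    rw [hK] at this
    push_cast at this
    rw [← this]
    simp only [S, hmuS]
  have hpq : (p : ℤ) ^ ((t + 1) / 2) ∣ (q : ℤ) := by
    rw [hq]; push_cast
    exact pow_dvd_pow _ (by omega)
  rw [Nat.modEq_iff_dvd]
  push_cast
  rw [hSd] at hS
  have h4 : (p : ℤ) ^ ((t + 1) / 2) ∣ (q : ℤ) * (q * Nat.card ↥(H ∩ U)) := hpq.mul_right _
  have h5 := dvd_sub hS h4
  have h6 : (1 : ℤ) - (Nat.card ↥(H ∩ U) : ℤ) = 1 + ((q : ℤ) ^ 2 - 1) * Nat.card ↥(H ∩ U) -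
      (q : ℤ) * (q * Nat.card ↥(H ∩ U)) := by ring
  rw [h6]
  exact h5

end HMUmain

open Finset in
/-- If `H` is a nondegenerate Hermitian unital in `PG(2, q²)` with `q = p^t` and `U`
is any unital embedded in `PG(2, q²)`, then `|H ∩ U| ≡ 1 (mod p^⌈t/2⌉)`. -/
theorem hermitian_meets_unital (p t q : ℕ) (hp : p.Prime) (ht : 0 < t) (hq : q = p ^ t)
    (K : Type*) [Field K] [Fintype K] (hK : Fintype.card K = q ^ 2)
    (A : Matrix (Fin 3) (Fin 3) K)
    (hA : A.transpose = A.map (· ^ q)) (hAinv : IsUnit A.det)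
    (H : Set (Projectivization K (Fin 3 → K)))
    (hH : H = {P | ∃ (v : Fin 3 → K) (hv : v ≠ 0),
        P = Projectivization.mk K v hv ∧ ∑ i, ∑ j, v i * A i j * v j ^ q = 0})
    (U : Set (Projectivization K (Fin 3 → K)))
    (hUcard : Nat.card U = q ^ 3 + 1)
    (hline : ∀ L : Submodule K (Fin 3 → K), Module.finrank K L = 2 →
      Nat.card {P : Projectivization K (Fin 3 → K) | P ∈ U ∧ P.submodule ≤ L} = 1 ∨
      Nat.card {P : Projectivization K (Fin 3 → K) | P ∈ U ∧ P.submodule ≤ L} = q + 1) :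
    Nat.card ↥(H ∩ U) ≡ 1 [MOD p ^ ((t + 1) / 2)] := by
  have : Fact p.Prime := ⟨hp⟩
  have hK' : Fintype.card K = p ^ (2 * t) := by rw [hK, hq, ← pow_mul, mul_comm]
  obtain ⟨p', hp'⟩ := CharP.exists K
  obtain ⟨n, hp'p, hn⟩ := FiniteField.card K p'
  have hpp : p' = p := by
    have h1 : p' ∣ p ^ (2 * t) := by
      rw [← hK', hn]
      exact dvd_pow_self _ n.ne_zero
    exact (Nat.prime_dvd_prime_iff_eq hp'p hp).1 (hp'p.dvd_of_dvd_pow h1)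
  subst hpp
  let _ : Algebra (ZMod p') K := ZMod.algebra K p'
  let _ : Fintype (GaloisField p' t) := Fintype.ofFinite _
  have hF : Fintype.card (GaloisField p' t) = q := by
    rw [← Nat.card_eq_fintype_card, GaloisField.card p' t ht.ne', hq]
  have hfrK : Module.finrank (ZMod p') K = 2 * t := by
    have := Module.card_eq_pow_finrank (K := ZMod p') (V := K)
    rw [hK', ZMod.card] at this
    exact (Nat.pow_right_injective hp.two_le this).symm
  obtain ⟨φ⟩ := FiniteField.nonempty_algHom_of_finrank_dvd (F := ZMod p') (K := GaloisField p' t)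
    (L := K) (by rw [GaloisField.finrank p' ht.ne', hfrK]; exact dvd_mul_left _ _)
  let _ : Algebra (GaloisField p' t) K := φ.toRingHom.toAlgebra
  exact hmu_final p' t q hp ht hq hF hK (fun x y => by rw [hq]; exact add_pow_char_pow x y p' t)
    A hA hAinv H hH U hUcard hline
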